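/- Monge equals Kantorovich for unbalanced transport with diffuse first marginal: let X₁, X₂ be Polish, H: C[X₁]×C[X₂] → [0,∞] proper, radially 1-homogeneous and continuous, μ_i ∈ M+(X_i) with μ₁ atomless and μ₁(X₁)>0. Then U_H(μ₁,μ₂) = inf{∫ H([x,1],[T(x),g(x)]) dμ₁(x) : (T,g): X₁ → X₂×[0,∞) Borel, T_♯(g·μ₁) = μ₂}. -/

import Mathlib

open MeasureTheory Topology Filter Set
open scoped NNReal ENNReal BoundedContinuousFunction

noncomputable section

namespace UOT

variable (X : Type*)

/-- The equivalence relation on `X × ℝ≥0` identifying all points with radius `0`. -/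
def coneSetoid : Setoid (X × ℝ≥0) where
  r p q := p = q ∨ (p.2 = 0 ∧ q.2 = 0)
  iseqv := by
    refine ⟨fun p => Or.inl rfl, ?_, ?_⟩
    · rintro p q (rfl | h)
      · exact Or.inl rfl
      · exact Or.inr ⟨h.2, h.1⟩
    · rintro p q r hpq hqr
      rcases hpq with rfl | h
      · exact hqr
      · rcases hqr with rfl | h'
        · exact Or.inr h
        · exact Or.inr ⟨h.1, h'.2⟩

/-- The geometric cone over `X`. -/
def Cone := Quotient (coneSetoid X)

/-- The canonical map sending `(x, r)` to the point `[x, r]` of the cone. -/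
def Cone.mk (x : X) (r : ℝ≥0) : Cone X := Quotient.mk (coneSetoid X) (x, r)

/-- The vertex `o` of the cone. -/
def Cone.vertex [Nonempty X] : Cone X := Cone.mk X (Classical.arbitrary X) 0

/-- The radial coordinate `r` of a point of the cone. -/
def Cone.radius : Cone X → ℝ≥0 :=
  Quotient.lift (fun p => p.2) (by
    rintro p q (rfl | ⟨h1, h2⟩)
    · rfl
    · simp [h1, h2])

/-- The base point `x` of a point of the cone (an arbitrary point of `X` at the vertex). -/
def Cone.basePt [Nonempty X] : Cone X → X :=
  Quotient.lift (fun p => if p.2 = 0 then Classical.arbitrary X else p.1) (by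
    rintro p q (rfl | ⟨h1, h2⟩)
    · rfl
    · simp [h1, h2])

/-- Radial rescaling `λ • [x, r] = [x, λ * r]` on the cone. -/
def Cone.smul (c : ℝ≥0) : Cone X → Cone X :=
  Quotient.lift (fun p => Cone.mk X p.1 (c * p.2)) (by
    rintro p q (rfl | ⟨h1, h2⟩)
    · rfl
    · apply Quotient.sound
      exact Or.inr ⟨by simp [h1], by simp [h2]⟩)

variable [TopologicalSpace X]

/-- The cone topology: a set is open iff its preimage in `X × ℝ≥0` is open and, when it
contains the vertex, it contains a whole strip `{[x, r] : r < ε}`. -/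
instance : TopologicalSpace (Cone X) where
  IsOpen U := IsOpen ((fun p : X × ℝ≥0 => Cone.mk X p.1 p.2) ⁻¹' U) ∧
      ∀ x : X, Cone.mk X x 0 ∈ U →
        ∃ ε : ℝ≥0, 0 < ε ∧ ∀ (y : X) (r : ℝ≥0), r < ε → Cone.mk X y r ∈ U
  isOpen_univ := ⟨isOpen_univ, fun _ _ => ⟨1, one_pos, fun _ _ _ => mem_univ _⟩⟩
  isOpen_inter := by
    rintro s t ⟨hs1, hs2⟩ ⟨ht1, ht2⟩
    refine ⟨hs1.inter ht1, fun x hx => ?_⟩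
    obtain ⟨ε₁, hε₁, h₁⟩ := hs2 x hx.1
    obtain ⟨ε₂, hε₂, h₂⟩ := ht2 x hx.2
    exact ⟨min ε₁ ε₂, lt_min hε₁ hε₂, fun y r hr =>
      ⟨h₁ y r (hr.trans_le (min_le_left _ _)), h₂ y r (hr.trans_le (min_le_right _ _))⟩⟩
  isOpen_sUnion := by
    intro S hS
    constructor
    · rw [Set.preimage_sUnion]
      exact isOpen_biUnion fun t ht => (hS t ht).1
    · intro x hx
      obtain ⟨t, ht, hxt⟩ := hx
      obtain ⟨ε, hε, h⟩ := (hS t ht).2 x hxt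
      exact ⟨ε, hε, fun y r hr => ⟨t, ht, h y r hr⟩⟩

instance : MeasurableSpace (Cone X) := borel (Cone X)

instance : BorelSpace (Cone X) := ⟨rfl⟩

/-- On a product of cones we use the Borel σ-algebra of the product topology. -/
instance (priority := 2000) prodConeMeasurableSpace (X₁ X₂ : Type*) [TopologicalSpace X₁]
    [TopologicalSpace X₂] : MeasurableSpace (Cone X₁ × Cone X₂) :=
  borel (Cone X₁ × Cone X₂)

instance (priority := 2000) prodConeBorelSpace (X₁ X₂ : Type*) [TopologicalSpace X₁]
    [TopologicalSpace X₂] : BorelSpace (Cone X₁ × Cone X₂) := ⟨rfl⟩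

variable {X}

/-- The scaled Dirac measure `r • δ_x` as a finite measure. -/
def diracFM {Y : Type*} [MeasurableSpace Y] (x : Y) : FiniteMeasure Y :=
  ⟨Measure.dirac x, inferInstance⟩

/-- The canonical map `[x, r] ↦ r • δ_x` from the cone to finite measures. -/
def coneToFM (X : Type*) [TopologicalSpace X] [MeasurableSpace X] :
    Cone X → FiniteMeasure X :=
  Quotient.lift (fun p : X × ℝ≥0 => p.2 • diracFM p.1) (by
    rintro p q (rfl | ⟨h1, h2⟩)
    · rfl
    · simp [h1, h2])

/-- A finite measure is discrete if it is a finite nonnegative combination of Dirac masses. -/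
def IsDiscreteFM {Y : Type*} [MeasurableSpace Y] (μ : FiniteMeasure Y) : Prop :=
  ∃ (n : ℕ) (c : Fin n → ℝ≥0) (x : Fin n → Y), μ = ∑ i, c i • diracFM (x i)

section Product

variable {X₁ X₂ : Type*} [TopologicalSpace X₁] [TopologicalSpace X₂]

/-- Radial `1`-homogeneity of a cost function on the product cone. -/
def RadiallyHomogeneous (H : Cone X₁ × Cone X₂ → ℝ≥0∞) : Prop :=
  ∀ (x₁ : X₁) (x₂ : X₂) (r₁ r₂ lam : ℝ≥0), 0 < lam →
    H (Cone.mk X₁ x₁ (lam * r₁), Cone.mk X₂ x₂ (lam * r₂)) =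
      (lam : ℝ≥0∞) * H (Cone.mk X₁ x₁ r₁, Cone.mk X₂ x₂ r₂)

/-- Radial convexity of a cost function on the product cone: every radial section is convex. -/
def RadiallyConvex (H : Cone X₁ × Cone X₂ → ℝ≥0∞) : Prop :=
  ∀ (x₁ : X₁) (x₂ : X₂) (a₁ a₂ b₁ b₂ t : ℝ≥0), t ≤ 1 →
    H (Cone.mk X₁ x₁ (t * a₁ + (1 - t) * b₁), Cone.mk X₂ x₂ (t * a₂ + (1 - t) * b₂)) ≤
      (t : ℝ≥0∞) * H (Cone.mk X₁ x₁ a₁, Cone.mk X₂ x₂ a₂) +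
        ((1 - t : ℝ≥0) : ℝ≥0∞) * H (Cone.mk X₁ x₁ b₁, Cone.mk X₂ x₂ b₂)

/-- Properness: `H` is not identically `+∞`. -/
def ProperCost (H : Cone X₁ × Cone X₂ → ℝ≥0∞) : Prop := ∃ y, H y ≠ ⊤

variable [MeasurableSpace X₁] [MeasurableSpace X₂]

/-- First `p`-homogeneous marginal `h₁^p(α) = (x₁)_♯ (r₁^p · α)`. -/
def homMarginalFst [Nonempty X₁] (p : ℝ) (α : Measure (Cone X₁ × Cone X₂)) : Measure X₁ :=
  Measure.map (fun y : Cone X₁ × Cone X₂ => Cone.basePt X₁ y.1)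
    (α.withDensity fun y => (Cone.radius X₁ y.1 : ℝ≥0∞) ^ p)

/-- Second `p`-homogeneous marginal `h₂^p(α) = (x₂)_♯ (r₂^p · α)`. -/
def homMarginalSnd [Nonempty X₂] (p : ℝ) (α : Measure (Cone X₁ × Cone X₂)) : Measure X₂ :=
  Measure.map (fun y : Cone X₁ × Cone X₂ => Cone.basePt X₂ y.2)
    (α.withDensity fun y => (Cone.radius X₂ y.2 : ℝ≥0∞) ^ p)

variable [Nonempty X₁] [Nonempty X₂]

/-- `α ∈ H^p(μ₁, μ₂)`: a (finite Radon) homogeneous coupling with finite `p`-th radial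
moments and `p`-homogeneous marginals `μ₁, μ₂`. -/
def IsHomCoupling (p : ℝ) (α : Measure (Cone X₁ × Cone X₂))
    (μ₁ : Measure X₁) (μ₂ : Measure X₂) : Prop :=
  IsFiniteMeasure α ∧
    (∫⁻ y, ((Cone.radius X₁ y.1 : ℝ≥0∞) ^ p + (Cone.radius X₂ y.2 : ℝ≥0∞) ^ p) ∂α) ≠ ⊤ ∧
    homMarginalFst p α = μ₁ ∧ homMarginalSnd p α = μ₂

/-- The unbalanced optimal transport cost `U_H`. -/
def UH (H : Cone X₁ × Cone X₂ → ℝ≥0∞) (μ₁ : Measure X₁) (μ₂ : Measure X₂) : ℝ≥0∞ :=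
  ⨅ (α : Measure (Cone X₁ × Cone X₂)) (_ : IsHomCoupling 1 α μ₁ μ₂), ∫⁻ y, H y ∂α

/-- The truncated product cone `C_R[X₁, X₂]`: both radii at most `R`. -/
def prodConeTrunc (R : ℝ≥0) : Set (Cone X₁ × Cone X₂) :=
  {y | Cone.radius X₁ y.1 ≤ R ∧ Cone.radius X₂ y.2 ≤ R}

/-- Membership of a pair of bounded continuous potentials in the dual constraint set `Φ_H`. -/
def InPhi (H : Cone X₁ × Cone X₂ → ℝ≥0∞) (φ₁ : X₁ →ᵇ ℝ) (φ₂ : X₂ →ᵇ ℝ) : Prop :=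
  ∀ (x₁ : X₁) (x₂ : X₂) (r₁ r₂ : ℝ≥0),
    ENNReal.ofReal (φ₁ x₁ * r₁ + φ₂ x₂ * r₂) ≤ H (Cone.mk X₁ x₁ r₁, Cone.mk X₂ x₂ r₂)

/-- `H`-cyclical monotonicity of a subset of the product cone. -/
def HCyclicallyMonotone (H : Cone X₁ × Cone X₂ → ℝ≥0∞)
    (Γ : Set (Cone X₁ × Cone X₂)) : Prop :=
  ∀ (N : ℕ) (y : Fin N → Cone X₁ × Cone X₂), (∀ i, y i ∈ Γ) → ∀ σ : Equiv.Perm (Fin N),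
    ∑ i, H (y i) ≤ ∑ i, H ((y i).1, (y (σ i)).2)

/-- A radial convex cone in the product cone. -/
def IsRadialConvexCone (Γ : Set (Cone X₁ × Cone X₂)) : Prop :=
  ∀ (x₁ : X₁) (x₂ : X₂) (a₁ a₂ b₁ b₂ lam mu : ℝ≥0),
    (Cone.mk X₁ x₁ a₁, Cone.mk X₂ x₂ a₂) ∈ Γ → (Cone.mk X₁ x₁ b₁, Cone.mk X₂ x₂ b₂) ∈ Γ →
      (Cone.mk X₁ x₁ (lam * a₁ + mu * b₁), Cone.mk X₂ x₂ (lam * a₂ + mu * b₂)) ∈ Γ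

end Product

/-- Convexity (with scalars in `ℝ≥0`) of an `ℝ≥0∞`-valued function on a module. -/
def ConvexENN {E : Type*} [AddCommMonoid E] [SMul ℝ≥0 E] (f : E → ℝ≥0∞) : Prop :=
  ∀ (a b : E) (t : ℝ≥0), t ≤ 1 →
    f (t • a + (1 - t) • b) ≤ (t : ℝ≥0∞) * f a + ((1 - t : ℝ≥0) : ℝ≥0∞) * f b

/-- The lower semicontinuous convex envelope: the largest lsc convex function below `F`. -/
def lscConvexHull {E : Type*} [TopologicalSpace E] [AddCommMonoid E] [SMul ℝ≥0 E]
    (F : E → ℝ≥0∞) : E → ℝ≥0∞ :=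
  fun e => ⨆ (g : E → ℝ≥0∞) (_ : LowerSemicontinuous g ∧ ConvexENN g ∧ g ≤ F), g e

/-- The convex envelope: the largest convex function below `F`. -/
def convexHullFn {E : Type*} [AddCommMonoid E] [SMul ℝ≥0 E] (F : E → ℝ≥0∞) : E → ℝ≥0∞ :=
  fun e => ⨆ (g : E → ℝ≥0∞) (_ : ConvexENN g ∧ g ≤ F), g e

/-- The lower semicontinuous envelope: the largest lsc function below `F`. -/
def lscHull {E : Type*} [TopologicalSpace E] (F : E → ℝ≥0∞) : E → ℝ≥0∞ :=
  fun e => ⨆ (g : E → ℝ≥0∞) (_ : LowerSemicontinuous g ∧ g ≤ F), g e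

end UOT

namespace UOT

section Atomless

open ProbabilityTheory unitInterval

/-- The distribution function of an atomless probability measure on `ℝ` is continuous. -/
lemma continuous_cdf_of_noAtoms (m : Measure ℝ) [IsProbabilityMeasure m] [NullSingletonClass m] :
    Continuous (cdf m) := by
  rw [continuous_iff_continuousAt]
  intro x
  rw [(monotone_cdf m).continuousAt_iff_leftLim_eq_rightLim, StieltjesFunction.rightLim_eq]
  have h : (cdf m).measure {x} = 0 := by rw [measure_cdf]; simp
  rw [StieltjesFunction.measure_singleton, ENNReal.ofReal_eq_zero] at h
  exact le_antisymm ((monotone_cdf m).leftLim_le le_rfl) (by linarith)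

/-- The distribution function pushes an atomless probability measure to the uniform one. -/
lemma measure_cdf_le (m : Measure ℝ) [IsProbabilityMeasure m] [NullSingletonClass m] {t : ℝ}
    (h0 : 0 ≤ t) (h1 : t ≤ 1) : m {x | cdf m x ≤ t} = ENNReal.ofReal t := by
  have hc := continuous_cdf_of_noAtoms m
  rcases h1.eq_or_lt with rfl | h1
  · have : {x | cdf m x ≤ 1} = univ := by ext x; simp [cdf_le_one]
    simp [this]
  obtain ⟨b, hb⟩ := ((tendsto_cdf_atTop m).eventually (lt_mem_nhds h1)).exists
  set S := {x | cdf m x ≤ t} with hS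
  have hbdd : BddAbove S := ⟨b, fun x hx => by
    by_contra! hbx
    exact absurd (hb.trans_le ((monotone_cdf m) hbx.le)) (not_lt.2 hx)⟩
  have hclosed : IsClosed S := isClosed_le hc continuous_const
  rcases S.eq_empty_or_nonempty with he | hne
  · have ht : t ≤ 0 := ge_of_tendsto (tendsto_cdf_atBot m) (Eventually.of_forall fun x => by
      by_contra! hx
      exact (he ▸ (show x ∈ S from hx.le) : x ∈ (∅ : Set ℝ)))
    simp [he, ENNReal.ofReal_eq_zero.2 ht]
  · have ha : sSup S ∈ S := hclosed.csSup_mem hne hbdd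
    have hSeq : S = Iic (sSup S) := by
      ext x
      exact ⟨fun hx => le_csSup hbdd hx, fun hx => ((monotone_cdf m) hx).trans ha⟩
    have hge : t ≤ cdf m (sSup S) := by
      refine ge_of_tendsto (hc.continuousAt.mono_left nhdsWithin_le_nhds :
        Tendsto (cdf m) (𝓝[>] (sSup S)) _) ?_
      filter_upwards [self_mem_nhdsWithin] with x hx
      by_contra! hxt
      exact absurd (le_csSup hbdd (show x ∈ S from hxt.le)) (not_le.2 hx)
    rw [hSeq, ← ofReal_cdf, le_antisymm ha hge]

variable {X : Type*} [MeasurableSpace X] [StandardBorelSpace X]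

/-- An atomless finite measure on a standard Borel space can be pushed to a multiple of the
uniform measure on the unit interval. -/
lemma exists_map_eq_smul_volume (ρ : Measure X) [IsFiniteMeasure ρ] [NullSingletonClass ρ] :
    ∃ U : X → I, Measurable U ∧ ρ.map U = ρ univ • (volume : Measure I) := by
  rcases eq_or_ne ρ 0 with rfl | hρ
  · exact ⟨fun _ => 0, measurable_const, by simp⟩
  have hne : NeZero ρ := ⟨hρ⟩
  have hu0 : ρ univ ≠ 0 := by simpa using hρ
  obtain ⟨θ, hθ⟩ := exists_measurableEmbedding_real X
  set P : Measure X := (ρ univ)⁻¹ • ρ with hP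
  have hPprob : IsProbabilityMeasure P :=
    ⟨by simp [hP]⟩
  set m : Measure ℝ := P.map θ with hm
  have hmprob : IsProbabilityMeasure m :=
    Measure.isProbabilityMeasure_map hθ.measurable.aemeasurable
  have hmat : NullSingletonClass m := ⟨fun x => by
    rw [hm, hθ.map_apply, hP, Measure.smul_apply,
      (subsingleton_singleton.preimage hθ.injective).measure_zero, smul_zero]⟩
  let F : ℝ → I := fun x => ⟨cdf m x, cdf_nonneg m x, cdf_le_one m x⟩
  have hF : Measurable F := (monotone_cdf m).measurable.subtype_mk
  have hmap : m.map F = volume := by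
    have : IsProbabilityMeasure (m.map F) := Measure.isProbabilityMeasure_map hF.aemeasurable
    refine Measure.ext_of_Iic _ _ fun t => ?_
    rw [Measure.map_apply hF measurableSet_Iic, unitInterval.volume_Iic]
    exact measure_cdf_le m t.2.1 t.2.2
  refine ⟨F ∘ θ, hF.comp hθ.measurable, ?_⟩
  have hρP : ρ = ρ univ • P := by
    rw [hP, smul_smul, ENNReal.mul_inv_cancel hu0 (measure_ne_top ρ _), one_smul]
  conv_lhs => rw [hρP]
  rw [Measure.map_smul, ← Measure.map_map hF hθ.measurable, ← hm, hmap]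

/-- An atomless finite measure takes all intermediate values on subsets of a measurable set. -/
lemma exists_measurable_subset_measure_eq (ρ : Measure X) [IsFiniteMeasure ρ] [NullSingletonClass ρ]
    {S : Set X} (hS : MeasurableSet S) {v : ℝ≥0∞} (hv : v ≤ ρ S) :
    ∃ Z ⊆ S, MeasurableSet Z ∧ ρ Z = v := by
  rcases eq_or_ne (ρ S) 0 with h0 | h0
  · exact ⟨∅, empty_subset _, .empty, by simpa [h0, eq_comm] using hv⟩
  obtain ⟨U, hU, hmap⟩ := exists_map_eq_smul_volume (ρ.restrict S)
  have hS_top : ρ S ≠ ⊤ := measure_ne_top ρ S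
  have hq : v / ρ S ≤ 1 := ENNReal.div_le_of_le_mul (by simpa using hv)
  let t : I := ⟨(v / ρ S).toReal, ENNReal.toReal_nonneg,
    by simpa using ENNReal.toReal_mono ENNReal.one_ne_top hq⟩
  refine ⟨S ∩ U ⁻¹' Iic t, inter_subset_left, hS.inter (hU measurableSet_Iic), ?_⟩
  have h := congrArg (fun κ => κ (Iic t)) hmap
  simp only [Measure.map_apply hU measurableSet_Iic, Measure.smul_apply,
    unitInterval.volume_Iic, smul_eq_mul, Measure.restrict_apply_univ,
    Measure.restrict_apply (hU measurableSet_Iic)] at h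
  rw [inter_comm, h, ENNReal.ofReal_toReal (ne_top_of_le_ne_top ENNReal.one_ne_top hq),
    ENNReal.mul_div_cancel h0 hS_top]

/-- An atomless finite measure can be pushed to any measure of the same mass. -/
lemma exists_measurable_map_eq_of_noAtoms {Y : Type*} [MeasurableSpace Y] [StandardBorelSpace Y]
    [Nonempty Y] (ρ : Measure X) [IsFiniteMeasure ρ] [NullSingletonClass ρ] (ν : Measure Y)
    (h : ν univ = ρ univ) : ∃ S : X → Y, Measurable S ∧ ρ.map S = ν := by
  rcases eq_or_ne (ρ univ) 0 with h0 | h0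
  · refine ⟨fun _ => Classical.arbitrary Y, measurable_const, ?_⟩
    rw [Measure.measure_univ_eq_zero.1 h0, Measure.measure_univ_eq_zero.1 (h.trans h0),
      Measure.map_zero]
  have htop := measure_ne_top ρ univ
  obtain ⟨U, hU, hmap⟩ := exists_map_eq_smul_volume ρ
  have : IsProbabilityMeasure ((ρ univ)⁻¹ • ν) :=
    ⟨by simp [h, ENNReal.inv_mul_cancel h0 htop]⟩
  obtain ⟨f, hf, hfmap⟩ := Measure.exists_measurable_map_eq ((ρ univ)⁻¹ • ν)
  refine ⟨f ∘ U, hf.comp hU, ?_⟩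
  rw [← Measure.map_map hf hU, hmap, Measure.map_smul, hfmap, smul_smul,
    ENNReal.mul_inv_cancel h0 htop, one_smul]

end Atomless

section Partition

variable {X : Type*} [MeasurableSpace X]

/-- Disjoint measurable sets `E i ⊆ A i`, for `i < n`, on which the partial sums of the measures
`α i` with `i < n` are concentrated with the prescribed masses. -/
structure IsPartialSplitting (α : ℕ → Measure X) (A : ℕ → Set X) (n : ℕ)
    (E : ℕ → Set X) : Prop where
  meas : ∀ i, MeasurableSet (E i)
  subset : ∀ i < n, E i ⊆ A i
  empty : ∀ i, n ≤ i → E i = ∅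
  disj : Pairwise (Function.onFun Disjoint E)
  null : (∑ j ∈ Finset.range n, α j) (⋃ i, E i)ᶜ = 0
  mass : ∀ i < n, (∑ j ∈ Finset.range n, α j) (E i) = α i univ

variable [StandardBorelSpace X]

lemma IsPartialSplitting.exists_succ {α : ℕ → Measure X} {A : ℕ → Set X}
    (hfin : ∀ i, IsFiniteMeasure (α i)) (hat : ∀ i, NullSingletonClass (α i))
    (hA : ∀ i, MeasurableSet (A i)) (hαA : ∀ i, α i (A i)ᶜ = 0) {n : ℕ} {E : ℕ → Set X}
    (h : IsPartialSplitting α A n E) :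
    ∃ E', IsPartialSplitting α A (n + 1) E' ∧ ∀ i < n, E' i ⊆ E i := by
  set ρ := ∑ j ∈ Finset.range n, α j with hρ
  have hρ' : ∑ j ∈ Finset.range (n + 1), α j = ρ + α n := Finset.sum_range_succ _ _
  have hρfin : IsFiniteMeasure ρ := by
    refine ⟨?_⟩
    rw [hρ, Measure.finsetSum_apply]
    exact ENNReal.sum_lt_top.2 fun i _ => measure_lt_top _ _
  have hρat : NullSingletonClass (ρ + α n) := ⟨fun x => by
    rw [← hρ', Measure.finsetSum_apply]
    exact Finset.sum_eq_zero fun i _ => measure_singleton x⟩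
  have hEA : ∀ B, α n (B ∩ A n) = α n B := fun B =>
    measure_inter_conull (hαA n)
  have hZ : ∀ i, ∃ Z ⊆ E i ∩ A n, MeasurableSet Z ∧ (ρ + α n) Z = α n (E i) := fun i => by
    refine exists_measurable_subset_measure_eq (ρ + α n) ((h.meas i).inter (hA n)) ?_
    rw [Measure.add_apply, hEA]
    exact le_add_self
  choose Z hZsub hZmeas hZmass using hZ
  have hUm : MeasurableSet (⋃ i, E i) := .iUnion h.meas
  set N := (⋃ i, Z i) ∪ (A n \ ⋃ i, E i) with hN
  have hNm : MeasurableSet N := (MeasurableSet.iUnion hZmeas).union ((hA n).diff hUm)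
  have hdisjN : ∀ i, Disjoint N (E i \ Z i) := by
    intro i
    rw [Set.disjoint_left]
    rintro x (hx | hx) ⟨hxE, hxZ⟩
    · obtain ⟨j, hj⟩ := mem_iUnion.1 hx
      rcases eq_or_ne j i with rfl | hji
      · exact hxZ hj
      · exact Set.disjoint_left.1 (h.disj hji) (hZsub j hj).1 hxE
    · exact hx.2 (mem_iUnion.2 ⟨i, hxE⟩)
  refine ⟨Function.update (fun i => E i \ Z i) n N, ⟨?_, ?_, ?_, ?_, ?_, ?_⟩, ?_⟩
  · intro i
    rcases eq_or_ne i n with rfl | hi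
    · simpa using hNm
    · simpa [hi] using (h.meas i).diff (hZmeas i)
  · intro i hi
    rcases eq_or_ne i n with rfl | hin
    · simp only [Function.update_self, hN]
      exact union_subset (iUnion_subset fun j x hx => (hZsub j hx).2) sdiff_subset
    · simp only [Function.update_of_ne hin]
      exact sdiff_subset.trans (h.subset i (by omega))
  · intro i hi
    rw [Function.update_of_ne (by omega), h.empty i (by omega), empty_sdiff]
  · intro i j hij
    rcases eq_or_ne i n with rfl | hi
    · simpa [Function.onFun, hij.symm] using hdisjN j
    · rcases eq_or_ne j n with rfl | hj
      · simpa [Function.onFun, hij] using (hdisjN i).symm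
      · simpa [Function.onFun, hi, hj] using
          (h.disj hij).mono sdiff_subset sdiff_subset
  · have hcov : (⋃ i, E i) ∪ A n ⊆ ⋃ i, Function.update (fun i => E i \ Z i) n N i := by
      have hNs : N ⊆ ⋃ i, Function.update (fun i => E i \ Z i) n N i := fun x hx =>
        mem_iUnion.2 ⟨n, by simpa using hx⟩
      have hE : (⋃ i, E i) ⊆ ⋃ i, Function.update (fun i => E i \ Z i) n N i := by
        intro x hx
        obtain ⟨i, hi⟩ := mem_iUnion.1 hx
        by_cases hxZ : x ∈ Z i
        · exact hNs (Or.inl (mem_iUnion.2 ⟨i, hxZ⟩))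
        · have hin : i ≠ n := by
            rintro rfl
            rw [h.empty i le_rfl] at hi
            exact hi
          exact mem_iUnion.2 ⟨i, by simpa [hin] using ⟨hi, hxZ⟩⟩
      refine union_subset hE fun x hx => ?_
      by_cases hxE : x ∈ ⋃ i, E i
      · exact hE hxE
      · exact hNs (Or.inr ⟨hx, hxE⟩)
    refine measure_mono_null (compl_subset_compl.2 hcov) ?_
    rw [hρ', Measure.add_apply, compl_union, add_eq_zero]
    exact ⟨measure_mono_null inter_subset_left h.null,
      measure_mono_null inter_subset_right (hαA n)⟩
  · intro i hi
    rw [hρ']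
    rcases eq_or_ne i n with rfl | hin
    · rw [Function.update_self, hN, measure_union _ ((hA i).diff hUm),
        measure_iUnion _ hZmeas]
      · simp only [hZmass]
        have h1 : ρ (A i \ ⋃ i, E i) = 0 :=
          measure_mono_null (fun x hx => hx.2) h.null
        rw [← measure_iUnion h.disj h.meas, Measure.add_apply, h1, zero_add, sdiff_eq, inter_comm,
          hEA]
        exact measure_add_measure_compl hUm
      · exact fun a b hab => (h.disj hab).mono (fun x hx => (hZsub a hx).1)
          (fun x hx => (hZsub b hx).1)
      · rw [Set.disjoint_left]
        intro x hx hx'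
        obtain ⟨j, hj⟩ := mem_iUnion.1 hx
        exact hx'.2 (mem_iUnion.2 ⟨j, (hZsub j hj).1⟩)
    · rw [Function.update_of_ne hin, measure_sdiff (fun x hx => (hZsub i hx).1)
        (hZmeas i).nullMeasurableSet (measure_ne_top _ _), hZmass, Measure.add_apply,
        ENNReal.add_sub_cancel_right (measure_ne_top _ _), h.mass i (by omega)]
  · intro i hi
    rw [Function.update_of_ne hi.ne]
    exact sdiff_subset

/-- If an atomless finite measure `μ` is a countable sum of measures `α i` concentrated on `A i`,
then the space can be partitioned into sets contained in the `A i` with the same masses. -/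
lemma exists_measurable_index_of_sum_eq (μ : Measure X) [IsFiniteMeasure μ] [NullSingletonClass μ]
    (α : ℕ → Measure X) (hsum : Measure.sum α = μ) (A : ℕ → Set X)
    (hA : ∀ i, MeasurableSet (A i)) (hαA : ∀ i, α i (A i)ᶜ = 0) :
    ∃ τ : X → ℕ, Measurable τ ∧ (∀ i, μ (τ ⁻¹' {i}) = α i univ) ∧ ∀ᵐ x ∂μ, x ∈ A (τ x) := by
  have hle : ∀ i, α i ≤ μ := fun i => hsum ▸ Measure.le_sum α i
  have hfin : ∀ i, IsFiniteMeasure (α i) := fun i => isFiniteMeasure_of_le μ (hle i)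
  have hat : ∀ i, NullSingletonClass (α i) := fun i =>
    ⟨fun x => le_antisymm ((hle i {x}).trans (measure_singleton x).le) zero_le⟩
  have h0 : IsPartialSplitting α A 0 (fun _ => ∅) :=
    ⟨by simp, by simp, by simp, fun i j _ => by simp [Function.onFun], by simp, by simp⟩
  let F : (n : ℕ) → {E // IsPartialSplitting α A n E} := fun n =>
    Nat.rec ⟨_, h0⟩ (fun n E => ⟨(E.2.exists_succ hfin hat hA hαA).choose,
      (E.2.exists_succ hfin hat hA hαA).choose_spec.1⟩) n
  have hF : ∀ n, ∀ i < n, (F (n + 1)).1 i ⊆ (F n).1 i := fun n =>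
    ((F n).2.exists_succ hfin hat hA hαA).choose_spec.2
  let W : ℕ → Set X := fun i => ⋂ k, (F (i + 1 + k)).1 i
  have hanti : ∀ i, Antitone fun k => (F (i + 1 + k)).1 i := fun i =>
    antitone_nat_of_succ_le fun k => hF (i + 1 + k) i (by omega)
  have hWm : ∀ i, MeasurableSet (W i) := fun i => .iInter fun k => (F _).2.meas i
  have hWA : ∀ i, W i ⊆ A i := fun i => (iInter_subset _ 0).trans ((F _).2.subset i (by omega))
  have hWd : Pairwise (Function.onFun Disjoint W) := by
    intro i j hij
    have hi : W i ⊆ (F (i + 1 + j)).1 i := iInter_subset _ j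
    have hj : W j ⊆ (F (i + 1 + j)).1 j := by
      have := iInter_subset (fun k => (F (j + 1 + k)).1 j) i
      rwa [show j + 1 + i = i + 1 + j by ring] at this
    exact ((F _).2.disj hij).mono hi hj
  have hμ : ∀ n (S : Set X), MeasurableSet S →
      μ S = (∑ j ∈ Finset.range n, α j) S + ∑' j, α (j + n) S := fun n S hS => by
    rw [← hsum, Measure.sum_apply _ hS, Measure.finsetSum_apply]
    exact (Summable.sum_add_tsum_nat_add' (f := fun j => α j S) ENNReal.summable).symm
  have htot : ∑' i, α i univ = μ univ := by rw [← hsum, Measure.sum_apply _ .univ]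
  have hWmass : ∀ i, μ (W i) = α i univ := by
    intro i
    have hlim : Tendsto (fun k => μ ((F (i + 1 + k)).1 i)) atTop (𝓝 (μ (W i))) :=
      tendsto_measure_iInter_atTop (fun k => ((F _).2.meas i).nullMeasurableSet) (hanti i)
        ⟨0, measure_ne_top _ _⟩
    have htail : Tendsto (fun k => α i univ + ∑' j, α (j + (k + (i + 1))) univ) atTop
        (𝓝 (α i univ + 0)) :=
      tendsto_const_nhds.add ((tendsto_add_atTop_iff_nat (i + 1)).2
        (ENNReal.tendsto_sum_nat_add (fun j => α j univ) (htot ▸ measure_ne_top μ univ)))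
    rw [add_zero] at htail
    refine tendsto_nhds_unique hlim
      (tendsto_of_tendsto_of_tendsto_of_le_of_le tendsto_const_nhds htail (fun k => ?_) fun k => ?_)
    · simp only [hμ (i + 1 + k) _ ((F _).2.meas i), (F (i + 1 + k)).2.mass i (by omega)]
      exact le_self_add
    · simp only [hμ (i + 1 + k) _ ((F _).2.meas i), (F (i + 1 + k)).2.mass i (by omega),
        show k + (i + 1) = i + 1 + k by ring]
      gcongr
      exact subset_univ _
  have hnull : μ (⋃ i, W i)ᶜ = 0 := by
    rw [measure_compl (.iUnion hWm) (measure_ne_top _ _), measure_iUnion hWd hWm]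
    simp [hWmass, htot]
  classical
  let p : X → ℕ → Prop := fun x i => x ∈ W i ∨ (i = 0 ∧ x ∉ ⋃ i, W i)
  have hp : ∀ x, ∃ i, p x i := fun x => by
    by_cases hx : x ∈ ⋃ i, W i
    · obtain ⟨i, hi⟩ := mem_iUnion.1 hx
      exact ⟨i, Or.inl hi⟩
    · exact ⟨0, Or.inr ⟨rfl, hx⟩⟩
  let τ : X → ℕ := fun x => Nat.find (hp x)
  have hτW : ∀ i, ∀ x ∈ W i, τ x = i := by
    intro i x hx
    rcases Nat.find_spec (hp x) with h | h
    · by_contra hne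
      exact Set.disjoint_left.1 (hWd hne) h hx
    · exact absurd (mem_iUnion.2 ⟨i, hx⟩) h.2
  have hae : ∀ᵐ x ∂μ, x ∈ ⋃ i, W i := hnull
  refine ⟨τ, measurable_find hp fun k => ?_, fun i => ?_, ?_⟩
  · rcases eq_or_ne k 0 with rfl | hk
    · have : {x | p x 0} = W 0 ∪ (⋃ i, W i)ᶜ := by ext x; simp [p]
      exact this ▸ (hWm 0).union (MeasurableSet.iUnion hWm).compl
    · simpa [p, hk] using hWm k
  · rw [← hWmass i]
    refine measure_congr ?_
    filter_upwards [hae] with x hx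
    obtain ⟨j, hj⟩ := mem_iUnion.1 hx
    refine propext ⟨fun h => ?_, fun h => hτW i x h⟩
    have : τ x = i := h
    rwa [← this, hτW j x hj]
  · filter_upwards [hae] with x hx
    obtain ⟨j, hj⟩ := mem_iUnion.1 hx
    rw [hτW j x hj]
    exact hWA j hj

end Partition

section Pratelli

variable {X Y : Type*} [TopologicalSpace X] [TopologicalSpace Y]

/-- The finiteness domain of a continuous cost is covered by countably many open rectangles on
which the cost oscillates by at most `ε`. -/
lemma exists_seq_rectangles [SecondCountableTopology X] [SecondCountableTopology Y]
    {c : X × Y → ℝ≥0∞} (hc : Continuous c) {ε : ℝ≥0∞} (hε : ε ≠ 0) :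
    ∃ (A : ℕ → Set X) (B : ℕ → Set Y) (K : ℕ → ℝ≥0∞), (∀ i, IsOpen (A i)) ∧
      (∀ i, IsOpen (B i)) ∧ (∀ i, ∀ p ∈ A i ×ˢ B i, K i ≤ c p ∧ c p ≤ K i + ε) ∧
      {p | c p ≠ ⊤} ⊆ ⋃ i, A i ×ˢ B i := by
  let bX := TopologicalSpace.countableBasis X
  let bY := TopologicalSpace.countableBasis Y
  have hbX := TopologicalSpace.isBasis_countableBasis X
  have hbY := TopologicalSpace.isBasis_countableBasis Y
  let G : Set (Set X × Set Y) := {R | (IsOpen R.1 ∧ IsOpen R.2) ∧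
    ∃ K, ∀ p ∈ R.1 ×ˢ R.2, K ≤ c p ∧ c p ≤ K + ε} ∩ insert (∅, ∅) (bX ×ˢ bY)
  have hG : G.Countable := (((TopologicalSpace.countable_countableBasis X).prod
    (TopologicalSpace.countable_countableBasis Y)).insert _).mono inter_subset_right
  have hne : G.Nonempty := ⟨(∅, ∅), ⟨⟨isOpen_empty, isOpen_empty⟩, 0, by simp⟩, mem_insert _ _⟩
  obtain ⟨R, hR⟩ := hG.exists_eq_range hne
  have hRG : ∀ i, R i ∈ G := fun i => hR ▸ mem_range_self i
  choose K hK using fun i => (hRG i).1.2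
  refine ⟨fun i => (R i).1, fun i => (R i).2, K, fun i => (hRG i).1.1.1, fun i => (hRG i).1.1.2,
    hK, fun p hp => ?_⟩
  have hε2 : ε / 2 ≠ 0 := by simpa using hε
  have hnhds : {q | c p - ε / 2 ≤ c q ∧ c q ≤ c p + ε / 2} ∈ 𝓝 p :=
    hc.continuousAt (ENNReal.Icc_mem_nhds hp hε2)
  obtain ⟨U, hU, V, hV, hUV⟩ := mem_nhds_prod_iff.1 hnhds
  obtain ⟨A, hA, hpA, hAU⟩ := hbX.mem_nhds_iff.1 hU
  obtain ⟨B, hB, hpB, hBV⟩ := hbY.mem_nhds_iff.1 hV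
  have hmem : (A, B) ∈ G := by
    refine ⟨⟨⟨hbX.isOpen hA, hbY.isOpen hB⟩, c p - ε / 2, fun q hq => ?_⟩,
      mem_insert_of_mem _ ⟨hA, hB⟩⟩
    obtain ⟨h1, h2⟩ := hUV (prod_mono hAU hBV hq)
    refine ⟨h1, h2.trans ?_⟩
    calc c p + ε / 2 ≤ c p - ε / 2 + ε / 2 + ε / 2 := by gcongr; exact le_tsub_add
      _ = c p - ε / 2 + ε := by rw [add_assoc, ENNReal.add_halves]
  rw [hR] at hmem
  obtain ⟨i, hi⟩ := hmem
  exact mem_iUnion.2 ⟨i, by simpa [hi] using ⟨hpA, hpB⟩⟩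

variable [PolishSpace X] [PolishSpace Y] [MeasurableSpace X] [BorelSpace X] [MeasurableSpace Y]
  [BorelSpace Y] [Nonempty Y]

/-- Plans with atomless first marginal can be replaced by maps at an arbitrarily small expense,
for continuous costs which may take the value `∞`. -/
lemma exists_map_lintegral_le {c : X × Y → ℝ≥0∞} (hc : Continuous c) (γ : Measure (X × Y))
    [IsFiniteMeasure γ] [NullSingletonClass γ.fst] (hfin : ∫⁻ p, c p ∂γ ≠ ⊤)
    {ε : ℝ≥0∞} (hε : ε ≠ 0) :
    ∃ S : X → Y, Measurable S ∧ γ.fst.map S = γ.snd ∧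
      ∫⁻ x, c (x, S x) ∂γ.fst ≤ ∫⁻ p, c p ∂γ + ε * γ univ := by
  obtain ⟨A, B, K, hA, hB, hK, hcov⟩ := exists_seq_rectangles hc hε
  have hRm : ∀ i, MeasurableSet (A i ×ˢ B i) := fun i =>
    (hA i).measurableSet.prod (hB i).measurableSet
  let D : ℕ → Set (X × Y) := disjointed fun i => A i ×ˢ B i
  have hDm : ∀ i, MeasurableSet (D i) := .disjointed hRm
  have hDsub : ∀ i, D i ⊆ A i ×ˢ B i := disjointed_subset _
  have hDdisj : Pairwise (Function.onFun Disjoint D) := disjoint_disjointed _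
  have hae : ∀ᵐ p ∂γ, p ∈ ⋃ i, D i := by
    filter_upwards [ae_lt_top hc.measurable hfin] with p hp
    rw [iUnion_disjointed]
    exact hcov hp.ne
  have hsum : Measure.sum (fun i => γ.restrict (D i)) = γ := by
    rw [← Measure.restrict_iUnion hDdisj hDm, Measure.restrict_eq_self_of_ae_mem hae]
  have hsumfst : Measure.sum (fun i => (γ.restrict (D i)).fst) = γ.fst := by
    conv_rhs => rw [← hsum]
    rw [Measure.fst_sum]
  have hsumsnd : Measure.sum (fun i => (γ.restrict (D i)).snd) = γ.snd := by
    conv_rhs => rw [← hsum]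
    rw [Measure.snd_sum]
  obtain ⟨τ, hτ, hτmass, hτA⟩ := exists_measurable_index_of_sum_eq γ.fst _ hsumfst A
    (fun i => (hA i).measurableSet) fun i => by
      rw [Measure.fst_apply (hA i).measurableSet.compl,
        Measure.restrict_apply (measurable_fst (hA i).measurableSet.compl)]
      convert measure_empty (μ := γ)
      rw [← disjoint_iff_inter_eq_empty, Set.disjoint_left]
      exact fun p hp hpD => hp (hDsub i hpD).1
  have hτm : ∀ i, MeasurableSet (τ ⁻¹' {i}) := fun i => hτ (.singleton i)
  have hmap : ∀ i, ∃ S : X → Y, Measurable S ∧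
      (γ.fst.restrict (τ ⁻¹' {i})).map S = (γ.restrict (D i)).snd := fun i => by
    refine exists_measurable_map_eq_of_noAtoms _ _ ?_
    rw [Measure.restrict_apply_univ, hτmass, Measure.fst_univ, Measure.snd_univ]
  choose S hSm hS using hmap
  have hτdisj : Pairwise (Function.onFun Disjoint fun i => τ ⁻¹' {i}) := fun i j hij =>
    Disjoint.preimage _ (by simpa using hij)
  have hτU : ⋃ i, τ ⁻¹' {i} = univ := by ext; simp
  have hsplit : Measure.sum (fun i => γ.fst.restrict (τ ⁻¹' {i})) = γ.fst := by
    rw [← Measure.restrict_iUnion hτdisj hτm, hτU, Measure.restrict_univ]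
  have hglue : ∀ i, (fun x => S (τ x) x) =ᵐ[γ.fst.restrict (τ ⁻¹' {i})] S i := fun i => by
    filter_upwards [ae_restrict_mem (hτm i)] with x hx
    rw [show τ x = i from hx]
  have hSτ : Measurable fun x => S (τ x) x :=
    (measurable_from_prod_countable_left (f := fun q : X × ℕ => S q.2 q.1) hSm).comp
      (measurable_id.prodMk hτ)
  refine ⟨fun x => S (τ x) x, hSτ, ?_, ?_⟩
  · conv_lhs => rw [← hsplit]
    rw [Measure.map_sum hSτ.aemeasurable, ← hsumsnd]
    congr 1
    funext i
    rw [Measure.map_congr (hglue i), hS]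
  have hpiece : ∀ i, ∫⁻ x in τ ⁻¹' {i}, c (x, S (τ x) x) ∂γ.fst ≤
      ∫⁻ p in D i, c p ∂γ + ε * γ (D i) := fun i => by
    have hSB : ∀ᵐ x ∂γ.fst.restrict (τ ⁻¹' {i}), S i x ∈ B i := by
      refine ae_of_ae_map (hSm i).aemeasurable (p := fun y => y ∈ B i) ?_
      rw [hS]
      refine ae_map_iff (p := fun y => y ∈ B i) measurable_snd.aemeasurable
        (hB i).measurableSet |>.2 ?_
      filter_upwards [ae_restrict_mem (hDm i)] with p hp using (hDsub i hp).2
    calc ∫⁻ x in τ ⁻¹' {i}, c (x, S (τ x) x) ∂γ.fst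
        ≤ ∫⁻ x in τ ⁻¹' {i}, (K i + ε) ∂γ.fst := by
          refine lintegral_mono_ae ?_
          filter_upwards [ae_restrict_mem (hτm i), hSB, ae_restrict_of_ae hτA] with x hx hxB hxA
          have hx : τ x = i := hx
          rw [hx] at hxA ⊢
          exact (hK i _ ⟨hxA, hxB⟩).2
      _ = K i * γ (D i) + ε * γ (D i) := by
          rw [setLIntegral_const, hτmass, Measure.fst_univ, Measure.restrict_apply_univ, add_mul]
      _ ≤ ∫⁻ p in D i, c p ∂γ + ε * γ (D i) := by
          gcongr
          rw [← setLIntegral_const]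
          exact setLIntegral_mono hc.measurable fun p hp => (hK i p (hDsub i hp)).1
  have hDU : γ (⋃ i, D i) = γ univ := measure_congr (eventuallyEq_univ.2 hae)
  calc ∫⁻ x, c (x, S (τ x) x) ∂γ.fst
      = ∑' i, ∫⁻ x in τ ⁻¹' {i}, c (x, S (τ x) x) ∂γ.fst := by
        conv_lhs => rw [← hsplit]
        rw [lintegral_sum_measure]
    _ ≤ ∑' i, (∫⁻ p in D i, c p ∂γ + ε * γ (D i)) := ENNReal.tsum_le_tsum hpiece
    _ = ∫⁻ p, c p ∂γ + ε * γ univ := by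
        rw [ENNReal.tsum_add, ENNReal.tsum_mul_left, ← lintegral_sum_measure, hsum,
          ← measure_iUnion hDdisj hDm, hDU]

end Pratelli

section ConeTopology

variable {X : Type*}

@[simp] lemma Cone.radius_mk (x : X) (r : ℝ≥0) : Cone.radius X (Cone.mk X x r) = r := rfl

lemma Cone.basePt_mk [Nonempty X] (x : X) {r : ℝ≥0} (hr : r ≠ 0) :
    Cone.basePt X (Cone.mk X x r) = x := if_neg hr

lemma Cone.mk_zero_eq (x y : X) : Cone.mk X x 0 = Cone.mk X y 0 :=
  Quotient.sound (Or.inr ⟨rfl, rfl⟩)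

lemma Cone.mk_basePt_radius [Nonempty X] (z : Cone X) :
    Cone.mk X (Cone.basePt X z) (Cone.radius X z) = z := by
  induction z using Quotient.inductionOn with | _ p =>
  obtain ⟨x, r⟩ := p
  change Cone.mk X (Cone.basePt X (Cone.mk X x r)) r = Cone.mk X x r
  rcases eq_or_ne r 0 with rfl | hr
  · exact Cone.mk_zero_eq _ _
  · rw [Cone.basePt_mk x hr]

variable [TopologicalSpace X]

lemma Cone.isOpen_iff {U : Set (Cone X)} :
    IsOpen U ↔ IsOpen ((fun p : X × ℝ≥0 => Cone.mk X p.1 p.2) ⁻¹' U) ∧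
      ∀ x : X, Cone.mk X x 0 ∈ U →
        ∃ ε : ℝ≥0, 0 < ε ∧ ∀ (y : X) (r : ℝ≥0), r < ε → Cone.mk X y r ∈ U := Iff.rfl

lemma Cone.continuous_mk : Continuous fun p : X × ℝ≥0 => Cone.mk X p.1 p.2 :=
  ⟨fun _ hU => hU.1⟩

lemma Cone.continuous_radius : Continuous (Cone.radius X) := by
  refine ⟨fun V hV => Cone.isOpen_iff.2 ⟨hV.preimage continuous_snd, fun x hx => ?_⟩⟩
  obtain ⟨ε, hε, h⟩ := exists_Ico_subset_of_mem_nhds (hV.mem_nhds hx) ⟨1, one_pos⟩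
  exact ⟨ε, hε, fun y r hr => h ⟨zero_le, hr⟩⟩

lemma Cone.measurable_basePt [Nonempty X] [MeasurableSpace X] [BorelSpace X] :
    Measurable (Cone.basePt X) := by
  refine measurable_of_isOpen fun U hU => ?_
  have hopen : IsOpen {z : Cone X | Cone.radius X z ≠ 0 ∧ Cone.basePt X z ∈ U} := by
    refine Cone.isOpen_iff.2 ⟨?_, fun x hx => absurd rfl hx.1⟩
    convert hU.prod (isOpen_ne (x := (0 : ℝ≥0))) using 1
    ext ⟨x, r⟩
    simp only [mem_preimage, mem_ofPred_eq, radius_mk, mem_prod]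
    constructor
    · rintro ⟨hr, hx⟩
      exact ⟨Cone.basePt_mk x hr ▸ hx, hr⟩
    · rintro ⟨hx, hr⟩
      exact ⟨hr, (Cone.basePt_mk x hr).symm ▸ hx⟩
  have hrad : MeasurableSet {z : Cone X | Cone.radius X z = 0} :=
    (isClosed_eq Cone.continuous_radius continuous_const).measurableSet
  have hz : ∀ z : Cone X, Cone.radius X z = 0 →
      Cone.basePt X z = Cone.basePt X (Cone.mk X (Classical.arbitrary X) 0) := fun z h => by
    rw [← Cone.mk_basePt_radius z, h, Cone.mk_zero_eq _ (Classical.arbitrary X)]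
  by_cases hU0 : Cone.basePt X (Cone.mk X (Classical.arbitrary X) 0) ∈ U
  · convert hopen.measurableSet.union hrad using 1
    ext z
    simp only [mem_preimage, mem_union, mem_ofPred_eq]
    by_cases h : Cone.radius X z = 0 <;> simp [h, hz, hU0]
  · convert hopen.measurableSet using 1
    ext z
    simp only [mem_preimage, mem_ofPred_eq]
    by_cases h : Cone.radius X z = 0 <;> simp [h, hz, hU0]

/-- Neighbourhoods of the vertex contain a strip of small radii, uniformly in the base point. -/
lemma Cone.exists_strip_subset {U : Set (Cone X)} {x : X} (hU : U ∈ 𝓝 (Cone.mk X x 0)) :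
    ∃ n : ℕ, ∀ (y : X) (r : ℝ≥0), r ≤ 1 / ((n : ℝ≥0) + 1) → Cone.mk X y r ∈ U := by
  obtain ⟨V, hVU, hV, hxV⟩ := mem_nhds_iff.1 hU
  obtain ⟨ε, hε, h⟩ := hV.2 x hxV
  obtain ⟨n, hn⟩ := exists_nat_one_div_lt hε
  exact ⟨n, fun y r hr => hVU (h y r (hr.trans_lt hn))⟩

end ConeTopology

section VertexRemoval

variable {X₁ X₂ : Type*}

/-- The second marginal, weighted by the radius, of a measure on `X₁ × (X₂ × ℝ≥0)`. -/
def radialSnd [MeasurableSpace X₁] [MeasurableSpace X₂] (γ : Measure (X₁ × (X₂ × ℝ≥0))) :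
    Measure X₂ :=
  (γ.withDensity fun p => (p.2.2 : ℝ≥0∞)).map fun p => p.2.1

lemma lintegral_radialSnd [MeasurableSpace X₁] [MeasurableSpace X₂]
    (γ : Measure (X₁ × (X₂ × ℝ≥0))) {f : X₂ → ℝ≥0∞} (hf : Measurable f) :
    ∫⁻ y, f y ∂radialSnd γ = ∫⁻ p, f p.2.1 * p.2.2 ∂γ := by
  rw [radialSnd, lintegral_map hf (by fun_prop),
    lintegral_withDensity_eq_lintegral_mul _ (by fun_prop) (by fun_prop)]
  simp only [Pi.mul_apply, mul_comm]

lemma RadiallyHomogeneous.mul_eq {H : Cone X₁ × Cone X₂ → ℝ≥0∞} (hhom : RadiallyHomogeneous H)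
    (x : X₁) (y : X₂) (s : ℝ≥0) {a : ℝ≥0} (ha : a ≠ 0) :
    (a : ℝ≥0∞) * H (Cone.mk X₁ x 1, Cone.mk X₂ y (s / a)) =
      H (Cone.mk X₁ x a, Cone.mk X₂ y s) := by
  rw [← hhom x y 1 (s / a) a (pos_iff_ne_zero.2 ha), mul_one, mul_div_cancel₀ _ ha]

variable [TopologicalSpace X₁] [TopologicalSpace X₂] [MeasurableSpace X₂]

/-- Where the cost is finite, the radius `1` of the first point can be slightly lowered at a small
expense; for a nonzero plan this can be done uniformly on a non-null set. -/
lemma exists_measurableSet_lowering [MeasurableSpace X₁] [PolishSpace X₁] [PolishSpace X₂]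
    [BorelSpace X₁] [BorelSpace X₂] {H : Cone X₁ × Cone X₂ → ℝ≥0∞} (hcont : Continuous H)
    (γ : Measure (X₁ × (X₂ × ℝ≥0))) (hγ : γ ≠ 0)
    (hfin : ∫⁻ p, H (Cone.mk X₁ p.1 1, Cone.mk X₂ p.2.1 p.2.2) ∂γ ≠ ⊤)
    {ε : ℝ≥0∞} (hε : ε ≠ 0) :
    ∃ (n : ℕ) (G : Set (X₁ × (X₂ × ℝ≥0))), MeasurableSet G ∧ γ G ≠ 0 ∧
      ∀ p ∈ G, ∀ t : ℝ≥0, t ≤ 1 / ((n : ℝ≥0) + 1) →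
        H (Cone.mk X₁ p.1 (1 - t), Cone.mk X₂ p.2.1 p.2.2) ≤
          H (Cone.mk X₁ p.1 1, Cone.mk X₂ p.2.1 p.2.2) + ε := by
  have hc : ∀ t : ℝ≥0, Continuous fun p : X₁ × (X₂ × ℝ≥0) =>
      H (Cone.mk X₁ p.1 (1 - t), Cone.mk X₂ p.2.1 p.2.2) := fun t =>
    hcont.comp ((Cone.continuous_mk.comp (continuous_fst.prodMk continuous_const)).prodMk
      (Cone.continuous_mk.comp continuous_snd))
  have hc0 : Continuous fun p : X₁ × (X₂ × ℝ≥0) =>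
      H (Cone.mk X₁ p.1 1, Cone.mk X₂ p.2.1 p.2.2) := by simpa using hc 0
  let G : ℕ → Set (X₁ × (X₂ × ℝ≥0)) := fun n =>
    {p | ∀ t : ℝ≥0, t ≤ 1 / ((n : ℝ≥0) + 1) →
      H (Cone.mk X₁ p.1 (1 - t), Cone.mk X₂ p.2.1 p.2.2) ≤
        H (Cone.mk X₁ p.1 1, Cone.mk X₂ p.2.1 p.2.2) + ε}
  have hG : ∀ n, MeasurableSet (G n) := fun n => by
    refine IsClosed.measurableSet ?_
    simp only [G, ofPred_forall]
    exact isClosed_iInter fun t => isClosed_iInter fun _ =>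
      isClosed_le (hc t) (hc0.add continuous_const)
  by_contra! hcon
  have hnull : ∀ n, γ (G n) = 0 := fun n => by
    by_contra hn
    obtain ⟨p, hp, t, ht, hlt⟩ := hcon n (G n) (hG n) hn
    exact absurd (hp t ht) (not_le.2 hlt)
  refine hγ (Measure.measure_univ_eq_zero.1 (le_antisymm ?_ zero_le))
  rw [← measure_iUnion_null hnull]
  refine measure_mono_ae ?_
  filter_upwards [ae_lt_top hc0.measurable hfin] with p hp _
  have ht : Continuous fun t : ℝ≥0 => H (Cone.mk X₁ p.1 (1 - t), Cone.mk X₂ p.2.1 p.2.2) :=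
    hcont.comp ((Cone.continuous_mk.comp (continuous_const.prodMk
      (continuous_const.sub continuous_id))).prodMk continuous_const)
  have hlt : H (Cone.mk X₁ p.1 (1 - 0), Cone.mk X₂ p.2.1 p.2.2) <
      H (Cone.mk X₁ p.1 1, Cone.mk X₂ p.2.1 p.2.2) + ε := by
    simpa using ENNReal.lt_add_right hp.ne hε
  obtain ⟨δ, hδ, h⟩ := exists_Ico_subset_of_mem_nhds
    (ht.continuousAt.preimage_mem_nhds (Iio_mem_nhds hlt)) ⟨1, one_pos⟩
  obtain ⟨n, hn⟩ := exists_nat_one_div_lt hδ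
  exact mem_iUnion.2 ⟨n, fun t ht => (h ⟨zero_le, ht.trans_lt hn⟩ : _ < _).le⟩

/-- Mass created at the vertex of the first cone can also be sent from points with a sufficiently
small positive radius, chosen uniformly in the base point. -/
lemma exists_measurable_radius [Nonempty X₁] [PolishSpace X₂] [BorelSpace X₂]
    {H : Cone X₁ × Cone X₂ → ℝ≥0∞} (hcont : Continuous H) {ε : ℝ≥0∞} (hε : ε ≠ 0) :
    ∃ b : X₂ → ℝ≥0, Measurable b ∧ (∀ y, 0 < b y) ∧ (∀ y, b y ≤ 1) ∧
      ∀ y x (r : ℝ≥0), r ≤ b y → H (Cone.mk X₁ x r, Cone.mk X₂ y 1) ≤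
        H (Cone.vertex X₁, Cone.mk X₂ y 1) + ε := by
  classical
  let p : X₂ → ℕ → Prop := fun y n => ∀ (x : X₁) (r : ℝ≥0), r ≤ 1 / ((n : ℝ≥0) + 1) →
    H (Cone.mk X₁ x r, Cone.mk X₂ y 1) ≤ H (Cone.vertex X₁, Cone.mk X₂ y 1) + ε
  have hp : ∀ y, ∃ n, p y n := fun y => by
    by_cases htop : H (Cone.vertex X₁, Cone.mk X₂ y 1) = ⊤
    · exact ⟨0, fun x r _ => by simp [htop]⟩
    have hlt := ENNReal.lt_add_right htop hε
    have hnhds : {z | H (z, Cone.mk X₂ y 1) <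
        H (Cone.vertex X₁, Cone.mk X₂ y 1) + ε} ∈ 𝓝 (Cone.vertex X₁) :=
      (hcont.comp (continuous_id.prodMk continuous_const)).continuousAt.preimage_mem_nhds
        (Iio_mem_nhds hlt)
    obtain ⟨n, hn⟩ := Cone.exists_strip_subset hnhds
    exact ⟨n, fun x r hr => (hn x r hr : _ < _).le⟩
  have hc : ∀ z : Cone X₁, Continuous fun y : X₂ => H (z, Cone.mk X₂ y 1) := fun z =>
    hcont.comp (continuous_const.prodMk
      (Cone.continuous_mk.comp (continuous_id.prodMk continuous_const)))
  have hm : ∀ n, MeasurableSet {y | p y n} := fun n => by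
    refine IsClosed.measurableSet ?_
    simp only [p, ofPred_forall]
    exact isClosed_iInter fun x => isClosed_iInter fun r => isClosed_iInter fun _ =>
      isClosed_le (hc _) ((hc _).add continuous_const)
  have hfind : Measurable fun y => Nat.find (hp y) := measurable_find hp hm
  refine ⟨fun y => 1 / ((Nat.find (hp y) : ℝ≥0) + 1), ?_, fun y => by positivity, fun y => ?_,
    fun y x r hr => Nat.find_spec (hp y) x r hr⟩
  · exact (measurable_from_top (f := fun n : ℕ => 1 / ((n : ℝ≥0) + 1))).comp hfind
  · exact div_le_one_of_le₀ (by simp) zero_le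

lemma continuous_mk_one_prodMk_mk {X₁ X₂ : Type*} [TopologicalSpace X₁] [TopologicalSpace X₂] :
    Continuous fun p : X₁ × (X₂ × ℝ≥0) =>
      ((Cone.mk X₁ p.1 1, Cone.mk X₂ p.2.1 p.2.2) : Cone X₁ × Cone X₂) :=
  (Cone.continuous_mk.comp (continuous_fst.prodMk continuous_const)).prodMk
    (Cone.continuous_mk.comp continuous_snd)

/-- A plan together with mass created at the vertex of the first cone can be replaced, at an
arbitrarily small expense, by a plan. -/
lemma exists_plan_absorbing_vertex [MeasurableSpace X₁] [Nonempty X₁] [PolishSpace X₁]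
    [PolishSpace X₂] [BorelSpace X₁] [BorelSpace X₂]
    {H : Cone X₁ × Cone X₂ → ℝ≥0∞} (hhom : RadiallyHomogeneous H) (hcont : Continuous H)
    (γ : Measure (X₁ × (X₂ × ℝ≥0))) [IsFiniteMeasure γ] (hγ : γ ≠ 0)
    (hfin : ∫⁻ p, H (Cone.mk X₁ p.1 1, Cone.mk X₂ p.2.1 p.2.2) ∂γ ≠ ⊤)
    (ν : Measure X₂) [IsFiniteMeasure ν] {ε : ℝ≥0∞} (hε : ε ≠ 0) :
    ∃ γ' : Measure (X₁ × (X₂ × ℝ≥0)), γ'.fst = γ.fst ∧ radialSnd γ' = radialSnd γ + ν ∧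
      ∫⁻ p, H (Cone.mk X₁ p.1 1, Cone.mk X₂ p.2.1 p.2.2) ∂γ' ≤
        ∫⁻ p, H (Cone.mk X₁ p.1 1, Cone.mk X₂ p.2.1 p.2.2) ∂γ + ε * γ univ +
          (∫⁻ y, H (Cone.vertex X₁, Cone.mk X₂ y 1) ∂ν + ε * ν univ) := by
  rcases eq_or_ne ν 0 with rfl | hν
  · exact ⟨γ, rfl, by simp, le_self_add.trans le_self_add⟩
  obtain ⟨n, G, hG, hG0, hGH⟩ := exists_measurableSet_lowering hcont γ hγ hfin hε
  obtain ⟨b, hb, hbpos, hb1, hbH⟩ := exists_measurable_radius (X₁ := X₁) (X₂ := X₂) hcont hε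
  have hc : Measurable fun p : X₁ × (X₂ × ℝ≥0) =>
      H (Cone.mk X₁ p.1 1, Cone.mk X₂ p.2.1 p.2.2) :=
    (hcont.comp continuous_mk_one_prodMk_mk).measurable
  have hGtop : γ G ≠ ⊤ := measure_ne_top γ G
  have hM0 : ∫⁻ y, (b y : ℝ≥0∞) ∂ν ≠ 0 := by
    rw [Ne, lintegral_eq_zero_iff (by fun_prop)]
    intro h
    refine hν (Measure.measure_univ_eq_zero.1 (measure_mono_null (fun y _ => ?_) h))
    simpa using (hbpos y).ne'
  have hMtop : ∫⁻ y, (b y : ℝ≥0∞) ∂ν ≠ ⊤ := by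
    refine ne_top_of_le_ne_top (measure_ne_top ν univ) ?_
    calc ∫⁻ y, (b y : ℝ≥0∞) ∂ν ≤ ∫⁻ _, 1 ∂ν :=
          lintegral_mono fun y => ENNReal.coe_le_one_iff.2 (hb1 y)
      _ = ν univ := by simp
  lift γ G to ℝ≥0 using hGtop with g hg
  lift ∫⁻ y, (b y : ℝ≥0∞) ∂ν to ℝ≥0 using hMtop with M hM
  replace hG0 : g ≠ 0 := by exact_mod_cast hG0
  replace hM0 : M ≠ 0 := by exact_mod_cast hM0
  -- the fraction of the mass over `G` which is redirected to serve `ν`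
  obtain ⟨t, ht0, htn, ht2, htM⟩ : ∃ t : ℝ≥0, t ≠ 0 ∧ t ≤ 1 / ((n : ℝ≥0) + 1) ∧ t < 1 ∧
      t * g ≤ M := by
    refine ⟨min (1 / ((n : ℝ≥0) + 1)) (min (1 / 2) (M / g)), ?_, min_le_left _ _, ?_, ?_⟩
    · have : 0 < M / g := by positivity
      have : (0 : ℝ≥0) < 1 / ((n : ℝ≥0) + 1) := by positivity
      refine ne_of_gt ?_
      simp only [lt_min_iff]
      refine ⟨this, by norm_num, by assumption⟩
    · exact ((min_le_right _ _).trans (min_le_left _ _)).trans_lt (by norm_num)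
    · calc _ ≤ M / g * g := by
            gcongr
            exact (min_le_right _ _).trans (min_le_right _ _)
        _ = M := div_mul_cancel₀ _ hG0
  set a : ℝ≥0 := 1 - t with ha
  have ha0 : a ≠ 0 := (tsub_pos_of_lt ht2).ne'
  have hat : a + t = 1 := tsub_add_cancel_of_le ht2.le
  set b' : X₂ → ℝ≥0 := fun y => t * g / M * b y with hb'
  have hb'm : Measurable b' := by fun_prop
  have hb'0 : ∀ y, b' y ≠ 0 := fun y => by
    have := hbpos y
    positivity
  have hb'b : ∀ y, b' y ≤ b y := fun y =>
    mul_le_of_le_one_left zero_le (div_le_one_of_le₀ htM zero_le)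
  have hb'int : ∫⁻ y, (b' y : ℝ≥0∞) ∂ν = t * g := by
    simp only [hb', ENNReal.coe_mul]
    rw [lintegral_const_mul _ (by fun_prop), ← hM, ← ENNReal.coe_mul, div_mul_cancel₀ _ hM0,
      ENNReal.coe_mul]
  have hgg : ((g⁻¹ : ℝ≥0) : ℝ≥0∞) * g = 1 := by
    rw [← ENNReal.coe_mul, inv_mul_cancel₀ hG0, ENNReal.coe_one]
  let Φ : X₁ × (X₂ × ℝ≥0) → X₁ × (X₂ × ℝ≥0) := fun p => (p.1, (p.2.1, p.2.2 / a))
  let Ψ : (X₁ × (X₂ × ℝ≥0)) × X₂ → X₁ × (X₂ × ℝ≥0) := fun q => (q.1.1, (q.2, 1 / b' q.2))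
  have hΦ : Measurable Φ := by fun_prop
  have hΨ : Measurable Ψ := by fun_prop
  let w : (X₁ × (X₂ × ℝ≥0)) × X₂ → ℝ≥0∞ := fun q => (g⁻¹ : ℝ≥0) * b' q.2
  have hw : Measurable w := by fun_prop
  let γ' : Measure (X₁ × (X₂ × ℝ≥0)) := γ.restrict Gᶜ +
    ((a : ℝ≥0∞) • (γ.restrict G).map Φ + (((γ.restrict G).prod ν).withDensity w).map Ψ)
  have hint : ∀ f : X₁ × (X₂ × ℝ≥0) → ℝ≥0∞, Measurable f →
      ∫⁻ p, f p ∂γ' = ∫⁻ p in Gᶜ, f p ∂γ + (∫⁻ p in G, a * f (Φ p) ∂γ +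
        ∫⁻ p in G, (g⁻¹ : ℝ≥0) * ∫⁻ y, b' y * f (p.1, (y, 1 / b' y)) ∂ν ∂γ) := fun f hf => by
    rw [lintegral_add_measure, lintegral_add_measure, lintegral_smul_measure,
      lintegral_map hf hΦ, lintegral_map hf hΨ,
      lintegral_withDensity_eq_lintegral_mul _ hw (g := fun q => f (Ψ q)) (hf.comp hΨ),
      lintegral_prod _ (hw.mul (g := fun q => f (Ψ q)) (hf.comp hΨ)).aemeasurable, smul_eq_mul,
      lintegral_const_mul _ (f := fun p => f (Φ p)) (hf.comp hΦ)]
    congr 3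
    funext p
    simp only [Pi.mul_apply, w, mul_assoc]
    rw [lintegral_const_mul]
    fun_prop
  have hsplit : ∀ f : X₁ × (X₂ × ℝ≥0) → ℝ≥0∞,
      ∫⁻ p, f p ∂γ = ∫⁻ p in Gᶜ, f p ∂γ + ∫⁻ p in G, f p ∂γ := fun f => by
    rw [add_comm, lintegral_add_compl f hG]
  refine ⟨γ', ?_, ?_, ?_⟩
  · refine Measure.ext_of_lintegral _ fun f hf => ?_
    rw [Measure.fst, Measure.fst, lintegral_map hf measurable_fst, lintegral_map hf measurable_fst,
      hint (fun p => f p.1) (hf.comp measurable_fst), hsplit, ← lintegral_add_left (by fun_prop)]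
    congr 2
    funext p
    have : ∫⁻ y, (b' y : ℝ≥0∞) * f p.1 ∂ν = t * g * f p.1 := by
      rw [lintegral_mul_const _ (by fun_prop), hb'int]
    calc (a : ℝ≥0∞) * f p.1 + (g⁻¹ : ℝ≥0) * ∫⁻ y, (b' y : ℝ≥0∞) * f p.1 ∂ν
        = (a + t * ((g⁻¹ : ℝ≥0) * g)) * f p.1 := by rw [this]; ring
      _ = f p.1 := by rw [hgg, mul_one, ← ENNReal.coe_add, hat, ENNReal.coe_one, one_mul]
  · refine Measure.ext_of_lintegral _ fun f hf => ?_
    rw [lintegral_add_measure, lintegral_radialSnd _ hf, lintegral_radialSnd _ hf,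
      hint _ (by fun_prop), hsplit, add_assoc]
    congr 2
    · refine lintegral_congr fun p => ?_
      simp only [Φ]
      rw [mul_left_comm, ← ENNReal.coe_mul, mul_div_cancel₀ _ ha0]
    · have : ∀ y, (b' y : ℝ≥0∞) * (f y * (1 / b' y : ℝ≥0)) = f y := fun y => by
        rw [mul_left_comm, ← ENNReal.coe_mul, mul_div_cancel₀ _ (hb'0 y), ENNReal.coe_one, mul_one]
      simp only [this]
      rw [setLIntegral_const, ← hg, mul_right_comm, hgg, one_mul]
  · rw [hint _ hc, hsplit, ← add_assoc]
    refine add_le_add ?_ ?_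
    · rw [add_assoc]
      gcongr
      calc ∫⁻ p in G, a * H (Cone.mk X₁ p.1 1, Cone.mk X₂ p.2.1 (p.2.2 / a)) ∂γ
          ≤ ∫⁻ p in G, (H (Cone.mk X₁ p.1 1, Cone.mk X₂ p.2.1 p.2.2) + ε) ∂γ := by
            refine setLIntegral_mono (hc.add measurable_const) fun p hp => ?_
            rw [hhom.mul_eq _ _ _ ha0]
            exact hGH p hp t htn
        _ = ∫⁻ p in G, H (Cone.mk X₁ p.1 1, Cone.mk X₂ p.2.1 p.2.2) ∂γ + ε * γ G := by
            rw [lintegral_add_right _ measurable_const, setLIntegral_const]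
        _ ≤ _ := by
            gcongr
            exact subset_univ _
    · calc ∫⁻ p in G, (g⁻¹ : ℝ≥0) * ∫⁻ y, b' y *
            H (Cone.mk X₁ p.1 1, Cone.mk X₂ y (1 / b' y)) ∂ν ∂γ
          ≤ ∫⁻ p in G, (g⁻¹ : ℝ≥0) *
              ∫⁻ y, (H (Cone.vertex X₁, Cone.mk X₂ y 1) + ε) ∂ν ∂γ := by
            gcongr with p y
            rw [hhom.mul_eq _ _ _ (hb'0 y)]
            exact hbH y _ _ (hb'b y)
        _ = _ := by
            rw [setLIntegral_const, ← hg, mul_right_comm, hgg, one_mul,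
              lintegral_add_right _ measurable_const, lintegral_const]

end VertexRemoval

section Coupling

variable {X₁ X₂ : Type*} [TopologicalSpace X₁] [TopologicalSpace X₂]

lemma measurable_radius_fst :
    Measurable fun z : Cone X₁ × Cone X₂ => Cone.radius X₁ z.1 :=
  (Cone.continuous_radius.comp continuous_fst).measurable

lemma measurable_radius_snd :
    Measurable fun z : Cone X₁ × Cone X₂ => Cone.radius X₂ z.2 :=
  (Cone.continuous_radius.comp continuous_snd).measurable

lemma measurable_basePt_fst [MeasurableSpace X₁] [BorelSpace X₁] [Nonempty X₁] :
    Measurable fun z : Cone X₁ × Cone X₂ => Cone.basePt X₁ z.1 :=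
  Cone.measurable_basePt.comp continuous_fst.measurable

lemma measurable_basePt_snd [MeasurableSpace X₂] [BorelSpace X₂] [Nonempty X₂] :
    Measurable fun z : Cone X₁ × Cone X₂ => Cone.basePt X₂ z.2 :=
  Cone.measurable_basePt.comp continuous_snd.measurable

lemma lintegral_homMarginalFst [MeasurableSpace X₁] [BorelSpace X₁] [Nonempty X₁]
    (α : Measure (Cone X₁ × Cone X₂)) {f : X₁ → ℝ≥0∞}
    (hf : Measurable f) :
    ∫⁻ x, f x ∂homMarginalFst 1 α = ∫⁻ z, Cone.radius X₁ z.1 * f (Cone.basePt X₁ z.1) ∂α := by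
  simp only [homMarginalFst, ENNReal.rpow_one]
  rw [lintegral_map hf measurable_basePt_fst, lintegral_withDensity_eq_lintegral_mul _
    measurable_radius_fst.coe_nnreal_ennreal (g := fun z => f (Cone.basePt X₁ z.1))
    (hf.comp measurable_basePt_fst)]
  rfl

lemma lintegral_homMarginalSnd [MeasurableSpace X₂] [BorelSpace X₂] [Nonempty X₂]
    (α : Measure (Cone X₁ × Cone X₂)) {f : X₂ → ℝ≥0∞}
    (hf : Measurable f) :
    ∫⁻ x, f x ∂homMarginalSnd 1 α = ∫⁻ z, Cone.radius X₂ z.2 * f (Cone.basePt X₂ z.2) ∂α := by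
  simp only [homMarginalSnd, ENNReal.rpow_one]
  rw [lintegral_map hf measurable_basePt_snd, lintegral_withDensity_eq_lintegral_mul _
    measurable_radius_snd.coe_nnreal_ennreal (g := fun z => f (Cone.basePt X₂ z.2))
    (hf.comp measurable_basePt_snd)]
  rfl

variable [MeasurableSpace X₁] [MeasurableSpace X₂] [BorelSpace X₁] [BorelSpace X₂]
  [Nonempty X₁] [Nonempty X₂]

/-- A measure on the product cone splits into a plan starting from radius `1` in the first cone
and mass created at the vertex of the first cone. -/
lemma exists_plan_and_vertex_mass [PolishSpace X₁] [PolishSpace X₂]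
    {H : Cone X₁ × Cone X₂ → ℝ≥0∞} (hhom : RadiallyHomogeneous H) (hcont : Continuous H)
    (α : Measure (Cone X₁ × Cone X₂)) :
    ∃ (γ : Measure (X₁ × (X₂ × ℝ≥0))) (ν : Measure X₂), γ.fst = homMarginalFst 1 α ∧
      radialSnd γ + ν = homMarginalSnd 1 α ∧
      ∫⁻ p, H (Cone.mk X₁ p.1 1, Cone.mk X₂ p.2.1 p.2.2) ∂γ +
        ∫⁻ y, H (Cone.vertex X₁, Cone.mk X₂ y 1) ∂ν ≤ ∫⁻ z, H z ∂α := by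
  let Φ : Cone X₁ × Cone X₂ → X₁ × (X₂ × ℝ≥0) := fun z =>
    (Cone.basePt X₁ z.1, (Cone.basePt X₂ z.2, Cone.radius X₂ z.2 / Cone.radius X₁ z.1))
  have hΦ : Measurable Φ := measurable_basePt_fst.prodMk
    (measurable_basePt_snd.prodMk (measurable_radius_snd.div measurable_radius_fst))
  have hr₁ := (measurable_radius_fst (X₁ := X₁) (X₂ := X₂)).coe_nnreal_ennreal
  have hr₂ := (measurable_radius_snd (X₁ := X₁) (X₂ := X₂)).coe_nnreal_ennreal
  let Z : Set (Cone X₁ × Cone X₂) := {z | Cone.radius X₁ z.1 = 0}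
  have hZ : MeasurableSet Z := measurable_radius_fst (measurableSet_singleton 0)
  let γ := (α.withDensity fun z => (Cone.radius X₁ z.1 : ℝ≥0∞)).map Φ
  let ν := ((α.restrict Z).withDensity fun z => (Cone.radius X₂ z.2 : ℝ≥0∞)).map
    fun z => Cone.basePt X₂ z.2
  have hγ : ∀ f : X₁ × (X₂ × ℝ≥0) → ℝ≥0∞, Measurable f →
      ∫⁻ p, f p ∂γ = ∫⁻ z, Cone.radius X₁ z.1 * f (Φ z) ∂α := fun f hf => by
    rw [lintegral_map hf hΦ,
      lintegral_withDensity_eq_lintegral_mul _ hr₁ (g := fun z => f (Φ z)) (hf.comp hΦ)]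
    rfl
  have hγ' : ∀ f : X₁ × (X₂ × ℝ≥0) → ℝ≥0∞, Measurable f →
      ∫⁻ p, f p ∂γ = ∫⁻ z in Zᶜ, Cone.radius X₁ z.1 * f (Φ z) ∂α := fun f hf => by
    rw [hγ f hf, ← lintegral_add_compl _ hZ, setLIntegral_congr_fun (g := fun _ => 0) hZ,
      lintegral_zero, zero_add]
    intro z hz
    simp [show Cone.radius X₁ z.1 = 0 from hz]
  have hν : ∀ f : X₂ → ℝ≥0∞, Measurable f →
      ∫⁻ y, f y ∂ν = ∫⁻ z in Z, Cone.radius X₂ z.2 * f (Cone.basePt X₂ z.2) ∂α := fun f hf => by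
    rw [lintegral_map hf measurable_basePt_snd, lintegral_withDensity_eq_lintegral_mul _ hr₂
      (g := fun z => f (Cone.basePt X₂ z.2)) (hf.comp measurable_basePt_snd)]
    rfl
  have hc : Measurable fun p : X₁ × (X₂ × ℝ≥0) =>
      H (Cone.mk X₁ p.1 1, Cone.mk X₂ p.2.1 p.2.2) :=
    (hcont.comp continuous_mk_one_prodMk_mk).measurable
  have hc₀ : Measurable fun y : X₂ => H (Cone.vertex X₁, Cone.mk X₂ y 1) :=
    (hcont.comp (continuous_const.prodMk
      (Cone.continuous_mk.comp (continuous_id.prodMk continuous_const)))).measurable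
  refine ⟨γ, ν, ?_, ?_, ?_⟩
  · refine Measure.ext_of_lintegral _ fun f hf => ?_
    rw [Measure.fst, lintegral_map hf measurable_fst, hγ (fun p => f p.1) (hf.comp measurable_fst),
      lintegral_homMarginalFst α hf]
  · refine Measure.ext_of_lintegral _ fun f hf => ?_
    rw [lintegral_add_measure, lintegral_radialSnd _ hf, lintegral_homMarginalSnd α hf,
      hν f hf, hγ' _ (by fun_prop), add_comm]
    conv_rhs => rw [← lintegral_add_compl _ hZ]
    congr 1
    refine setLIntegral_congr_fun hZ.compl fun z hz => ?_
    simp only [Φ]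
    rw [mul_left_comm, ← ENNReal.coe_mul, mul_div_cancel₀ _ (show Cone.radius X₁ z.1 ≠ 0 from hz),
      mul_comm]
  · rw [hγ' _ hc, hν _ hc₀, ← lintegral_add_compl H hZ, add_comm]
    refine add_le_add (setLIntegral_mono hcont.measurable fun z hz => ?_)
      (setLIntegral_mono hcont.measurable fun z hz => ?_)
    · rcases eq_or_ne (Cone.radius X₂ z.2) 0 with h | h
      · simp [h]
      · have hz1 : z.1 = Cone.mk X₁ (Classical.arbitrary X₁) 0 := by
          rw [← Cone.mk_basePt_radius z.1, show Cone.radius X₁ z.1 = 0 from hz]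
          exact Cone.mk_zero_eq _ _
        have := hhom (Classical.arbitrary X₁) (Cone.basePt X₂ z.2) 0 1 _ (pos_iff_ne_zero.2 h)
        rw [mul_zero, mul_one, Cone.mk_basePt_radius, ← hz1] at this
        rw [Cone.vertex, ← hz1, ← this]
    · simp only [Φ]
      rw [hhom.mul_eq _ _ _ (show Cone.radius X₁ z.1 ≠ 0 from hz), Cone.mk_basePt_radius,
        Cone.mk_basePt_radius]

/-- A transport-growth map induces a homogeneous coupling with the same cost. -/
lemma UH_le_lintegral_map [PolishSpace X₁] [PolishSpace X₂] {H : Cone X₁ × Cone X₂ → ℝ≥0∞}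
    (hcont : Continuous H) (μ₁ : Measure X₁) [IsFiniteMeasure μ₁] (μ₂ : Measure X₂)
    [IsFiniteMeasure μ₂] {T : X₁ → X₂} {g : X₁ → ℝ≥0} (hT : Measurable T) (hg : Measurable g)
    (hTg : (μ₁.withDensity fun x => (g x : ℝ≥0∞)).map T = μ₂) :
    UH H μ₁ μ₂ ≤ ∫⁻ x, H (Cone.mk X₁ x 1, Cone.mk X₂ (T x) (g x)) ∂μ₁ := by
  let S : X₁ → Cone X₁ × Cone X₂ := fun x => (Cone.mk X₁ x 1, Cone.mk X₂ (T x) (g x))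
  have hS : Measurable S :=
    continuous_mk_one_prodMk_mk.measurable.comp (measurable_id.prodMk (hT.prodMk hg))
  have hfst : homMarginalFst 1 (μ₁.map S) = μ₁ := by
    refine Measure.ext_of_lintegral _ fun f hf => ?_
    rw [lintegral_homMarginalFst _ hf, lintegral_map
      (f := fun z => (Cone.radius X₁ z.1 : ℝ≥0∞) * f (Cone.basePt X₁ z.1))
      (measurable_radius_fst.coe_nnreal_ennreal.mul (hf.comp measurable_basePt_fst)) hS]
    simp [S, Cone.basePt_mk]
  have hsnd : homMarginalSnd 1 (μ₁.map S) = μ₂ := by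
    refine Measure.ext_of_lintegral _ fun f hf => ?_
    rw [lintegral_homMarginalSnd _ hf, lintegral_map
      (f := fun z => (Cone.radius X₂ z.2 : ℝ≥0∞) * f (Cone.basePt X₂ z.2))
      (measurable_radius_snd.coe_nnreal_ennreal.mul (hf.comp measurable_basePt_snd)) hS, ← hTg,
      lintegral_map hf hT, lintegral_withDensity_eq_lintegral_mul _ hg.coe_nnreal_ennreal
      (g := fun x => f (T x)) (hf.comp hT)]
    refine lintegral_congr fun x => ?_
    rcases eq_or_ne (g x) 0 with h | h
    · simp [S, h]
    · simp [S, Cone.basePt_mk _ h]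
  have hmom : ∫⁻ z, ((Cone.radius X₁ z.1 : ℝ≥0∞) ^ (1 : ℝ) +
      (Cone.radius X₂ z.2 : ℝ≥0∞) ^ (1 : ℝ)) ∂μ₁.map S ≠ ⊤ := by
    simp only [ENNReal.rpow_one]
    rw [lintegral_add_left measurable_radius_fst.coe_nnreal_ennreal]
    refine ENNReal.add_ne_top.2 ⟨?_, ?_⟩
    · have := lintegral_homMarginalFst (μ₁.map S) (f := fun _ => 1) measurable_const
      rw [hfst] at this
      simp only [mul_one, lintegral_const, one_mul] at this
      exact this ▸ measure_ne_top _ _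
    · have := lintegral_homMarginalSnd (μ₁.map S) (f := fun _ => 1) measurable_const
      rw [hsnd] at this
      simp only [mul_one, lintegral_const, one_mul] at this
      exact this ▸ measure_ne_top _ _
  refine (iInf₂_le (μ₁.map S) ⟨inferInstance, hmom, hfst, hsnd⟩).trans ?_
  rw [lintegral_map hcont.measurable hS]

end Coupling

/-- Below any plan between `X₁` and the cone over `X₂`, up to `ε`, there is a transport-growth map
with the same marginals. -/
lemma exists_transport_growth_map_lintegral_le {X₁ X₂ : Type*} [TopologicalSpace X₁]
    [TopologicalSpace X₂] [PolishSpace X₁] [PolishSpace X₂] [MeasurableSpace X₁] [BorelSpace X₁]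
    [MeasurableSpace X₂] [BorelSpace X₂] [Nonempty X₂]
    {H : Cone X₁ × Cone X₂ → ℝ≥0∞} (hcont : Continuous H)
    (γ : Measure (X₁ × (X₂ × ℝ≥0))) [IsFiniteMeasure γ] [NullSingletonClass γ.fst]
    (hfin : ∫⁻ p, H (Cone.mk X₁ p.1 1, Cone.mk X₂ p.2.1 p.2.2) ∂γ ≠ ⊤)
    {ε : ℝ≥0∞} (hε : ε ≠ 0) :
    ∃ (T : X₁ → X₂) (g : X₁ → ℝ≥0), Measurable T ∧ Measurable g ∧
      Measure.map T (γ.fst.withDensity fun x => (g x : ℝ≥0∞)) = radialSnd γ ∧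
      ∫⁻ x, H (Cone.mk X₁ x 1, Cone.mk X₂ (T x) (g x)) ∂γ.fst ≤
        ∫⁻ p, H (Cone.mk X₁ p.1 1, Cone.mk X₂ p.2.1 p.2.2) ∂γ + ε * γ univ := by
  obtain ⟨S, hS, hSγ, hSle⟩ := exists_map_lintegral_le
    (hcont.comp continuous_mk_one_prodMk_mk) γ hfin hε
  refine ⟨fun x => (S x).1, fun x => (S x).2, hS.fst, hS.snd, ?_, hSle⟩
  refine Measure.ext_of_lintegral _ fun f hf => ?_
  have hm : Measurable fun q : X₂ × ℝ≥0 => f q.1 * q.2 := by fun_prop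
  rw [lintegral_map hf hS.fst, lintegral_withDensity_eq_lintegral_mul _
    hS.snd.coe_nnreal_ennreal (g := fun x => f (S x).1) (hf.comp hS.fst), lintegral_radialSnd _ hf,
    ← lintegral_map hm measurable_snd, ← Measure.snd, ← hSγ, lintegral_map hm hS]
  exact lintegral_congr fun x => mul_comm _ _

/-- Monge = Kantorovich for unbalanced transport with diffuse first
marginal: for Polish `X₁, X₂`, `H` proper, radially `1`-homogeneous and continuous, and
`μᵢ ∈ M₊(Xᵢ)` with `μ₁` atomless and `μ₁(X₁) > 0`,
`U_H(μ₁,μ₂) = inf { ∫ H([x,1],[T(x),g(x)]) dμ₁ : (T,g) Borel, T_♯(g μ₁) = μ₂ }`. -/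
theorem monge_equals_kantorovich
    {X₁ X₂ : Type*} [TopologicalSpace X₁] [TopologicalSpace X₂]
    [PolishSpace X₁] [PolishSpace X₂]
    [MeasurableSpace X₁] [BorelSpace X₁] [MeasurableSpace X₂] [BorelSpace X₂]
    [Nonempty X₁] [Nonempty X₂]
    (H : Cone X₁ × Cone X₂ → ℝ≥0∞) (hproper : ProperCost H)
    (hhom : RadiallyHomogeneous H) (hcont : Continuous H)
    (μ₁ : FiniteMeasure X₁) (μ₂ : FiniteMeasure X₂)
    (hdiffuse : ∀ x : X₁, (μ₁ : Measure X₁) {x} = 0) (hpos : μ₁ ≠ 0) :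
    UH H (μ₁ : Measure X₁) (μ₂ : Measure X₂) =
      ⨅ (T : X₁ → X₂) (g : X₁ → ℝ≥0)
        (_ : Measurable T ∧ Measurable g ∧
          Measure.map T ((μ₁ : Measure X₁).withDensity fun x => (g x : ℝ≥0∞)) =
            (μ₂ : Measure X₂)),
        ∫⁻ x, H (Cone.mk X₁ x 1, Cone.mk X₂ (T x) (g x)) ∂(μ₁ : Measure X₁) := by
  refine le_antisymm ?_ ?_
  · exact le_iInf fun T => le_iInf fun g => le_iInf fun h =>
      UH_le_lintegral_map hcont _ _ h.1 h.2.1 h.2.2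
  refine le_iInf₂ fun α hα => ?_
  rcases eq_or_ne (∫⁻ z, H z ∂α) ⊤ with htop | htop
  · exact htop ▸ le_top
  obtain ⟨-, -, hα₁, hα₂⟩ := hα
  obtain ⟨γ, ν, hγ₁, hγ₂, hγH⟩ := exists_plan_and_vertex_mass hhom hcont α
  rw [hα₁] at hγ₁
  rw [hα₂] at hγ₂
  have hγuniv : γ univ = (μ₁ : Measure X₁) univ := by rw [← hγ₁, Measure.fst_univ]
  have : IsFiniteMeasure γ := ⟨hγuniv ▸ measure_lt_top _ _⟩
  have hν : ν univ ≤ (μ₂ : Measure X₂) univ := by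
    rw [← hγ₂]
    exact le_add_self
  have : IsFiniteMeasure ν := ⟨hν.trans_lt (measure_lt_top _ _)⟩
  have hγ0 : γ ≠ 0 := by
    rintro rfl
    exact hpos (Subtype.ext (by simpa using hγ₁.symm))
  have hcost := ENNReal.add_ne_top.1 (ne_top_of_le_ne_top htop hγH)
  refine ENNReal.le_of_forall_pos_le_add fun ε hε _ => ?_
  set m := (μ₁ : Measure X₁) univ
  have hC : m + ν univ + m ≠ ⊤ := by simp [m]
  obtain ⟨δ, hδ0, hδ⟩ : ∃ δ : ℝ≥0, 0 < δ ∧ δ * (m + ν univ + m) < ε :=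
    ENNReal.exists_nnreal_pos_mul_lt hC (by simpa using hε.ne')
  have hδ' : (δ : ℝ≥0∞) ≠ 0 := by simpa using hδ0.ne'
  obtain ⟨γ', hγ'₁, hγ'₂, hγ'H⟩ :=
    exists_plan_absorbing_vertex hhom hcont γ hγ0 hcost.1 ν hδ'
  rw [hγ₁] at hγ'₁
  rw [hγ₂] at hγ'₂
  have hγ'univ : γ' univ = m := by rw [← Measure.fst_univ, hγ'₁]
  have : IsFiniteMeasure γ' := ⟨hγ'univ ▸ measure_lt_top _ _⟩
  have : NullSingletonClass γ'.fst := ⟨fun x => hγ'₁ ▸ hdiffuse x⟩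
  have hfin : ∫⁻ p, H (Cone.mk X₁ p.1 1, Cone.mk X₂ p.2.1 p.2.2) ∂γ' ≠ ⊤ :=
    ne_top_of_le_ne_top (by finiteness [hcost.1, hcost.2]) hγ'H
  obtain ⟨T, g, hT, hg, hTg, hle⟩ := exists_transport_growth_map_lintegral_le hcont γ' hfin hδ'
  rw [hγ'₁] at hTg hle
  refine ((iInf₂_le T g).trans (iInf_le _ ⟨hT, hg, hTg.trans hγ'₂⟩)).trans ?_
  calc _ ≤ _ := hle
    _ ≤ _ := add_le_add_left hγ'H _
    _ = (∫⁻ p, H (Cone.mk X₁ p.1 1, Cone.mk X₂ p.2.1 p.2.2) ∂γ +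
          ∫⁻ y, H (Cone.vertex X₁, Cone.mk X₂ y 1) ∂ν) + δ * (m + ν univ + m) := by
        rw [hγuniv, hγ'univ]
        ring
    _ ≤ _ := add_le_add hγH hδ.le

end UOT
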